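/- Fix reals a > b > 0 and set T = log(a/b); fix C > 0 and a sequence of natural numbers (K_n) with K_n / log n → 0. For each integer n ≥ 3, let Z₁, …, Z_{⌈n/2⌉} be i.i.d. Bernoulli with success probability min(1, b·log n/n), let W₁, …, W_{⌈n/2⌉} be i.i.d. Bernoulli with success probability min(1, a·log n/n), and let h₁, …, h_{K_n} be i.i.d. real random variables with |h_j| ≤ C almost surely, with all of the Z's, W's and h's mutually independent. Then for every ε > 0 there exists N such that for all n ≥ N, P( Σ_{k=1}^{⌈n/2⌉} (Z_k − W_k) ≥ (1/T)·Σ_{j=1}^{K_n} h_j + 1 + log n / log log n ) ≥ n^{−(√a−√b)²/2 − ε}. -/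

import Mathlib

open MeasureTheory ProbabilityTheory Filter

/-- `⌈n/2⌉`. -/
noncomputable def half (n : ℕ) : ℕ := ⌈(n : ℝ) / 2⌉₊

/-!
The counts `∑ Z` and `∑ W` are binomial with means of order `b log n / 2` and `a log n / 2`, hence
behave like Poisson variables: hitting a value close to `s log n` costs `n ^ (-I(s))`, with `I` the
Poisson rate function. It is cheapest for the two counts to meet at the geometric mean
`s = √(ab) / 2`, where the two costs add up to `(√a - √b)² / 2`. Since the threshold to be exceeded
is `o(log n)`, asking `∑ Z` to lie above `∑ W` by that much leaves both limiting values equal to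
`s`, so the exponent does not change.
-/

open scoped Topology

section BinomialMass

/-- The mass `P(Bin(m, q) = i)` of the binomial distribution. The parameter `q` is a real number,
not an element of the unit interval, so that it can be handled by real limits. -/
noncomputable def binomialMass (m : ℕ) (q : ℝ) (i : ℕ) : ℝ :=
  m.choose i * q ^ i * (1 - q) ^ (m - i)

lemma binomialMass_pos {m i : ℕ} {q : ℝ} (him : i ≤ m) (hq0 : 0 < q) (hq1 : q < 1) :
    0 < binomialMass m q i :=
  mul_pos (mul_pos (Nat.cast_pos.2 (Nat.choose_pos him)) (pow_pos hq0 i))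
    (pow_pos (sub_pos.2 hq1) (m - i))

lemma binomialMass_nonneg {q : ℝ} (hq : q ∈ Set.Icc 0 1) (m i : ℕ) : 0 ≤ binomialMass m q i :=
  mul_nonneg (mul_nonneg (m.choose i).cast_nonneg (pow_nonneg hq.1 i))
    (pow_nonneg (sub_nonneg.2 hq.2) (m - i))

lemma log_factorial_le {n : ℕ} (hn : n ≠ 0) :
    Real.log n.factorial ≤ n * Real.log n - n + Real.log n / 2 + 1 := by
  obtain ⟨k, rfl⟩ := Nat.exists_eq_succ_of_ne_zero hn
  have hanti : Real.log (Stirling.stirlingSeq (k + 1)) ≤ Real.log (Stirling.stirlingSeq 1) :=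
    Stirling.log_stirlingSeq'_antitone (Nat.zero_le k)
  have hpos : ((k + 1 : ℕ) : ℝ) ≠ 0 := by positivity
  rw [Stirling.log_stirlingSeq_formula, Stirling.log_stirlingSeq_formula,
    Real.log_mul two_ne_zero hpos, Real.log_div hpos (Real.exp_ne_zero 1)] at hanti
  simp only [Nat.factorial_one, Nat.cast_one, Real.log_one, mul_one, one_mul,
    Real.log_div one_ne_zero (Real.exp_ne_zero 1), Real.log_exp] at hanti
  linarith

lemma log_choose_ge {m i : ℕ} (him : i ≤ m) :
    i * Real.log (m + 1 - i) - Real.log i.factorial ≤ Real.log (m.choose i) := by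
  have hcast : ((m + 1 - i : ℕ) : ℝ) = m + 1 - i := by
    rw [Nat.cast_sub (by omega), Nat.cast_add_one]
  have hbase : (0 : ℝ) < m + 1 - i := by
    rw [← hcast, Nat.cast_pos]
    omega
  have hfact : (i.factorial : ℝ) ≠ 0 := by positivity
  have hchoose : (m.choose i : ℝ) ≠ 0 := by exact_mod_cast (Nat.choose_pos him).ne'
  have hpow : ((m : ℝ) + 1 - i) ^ i ≤ i.factorial * m.choose i := by
    rw [← hcast]
    exact_mod_cast Nat.descFactorial_eq_factorial_mul_choose m i ▸ Nat.pow_sub_le_descFactorial m i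
  have hlog := Real.log_le_log (pow_pos hbase i) hpow
  rw [Real.log_pow, Real.log_mul hfact hchoose] at hlog
  linarith

lemma neg_div_one_sub_le_log_one_sub {q : ℝ} (hq : q < 1) : -(q / (1 - q)) ≤ Real.log (1 - q) := by
  have hq' : 0 < 1 - q := sub_pos.2 hq
  calc -(q / (1 - q)) = 1 - (1 - q)⁻¹ := by field_simp; ring
    _ ≤ Real.log (1 - q) := Real.one_sub_inv_le_log_of_pos hq'

lemma log_binomialMass_ge {m i : ℕ} {q : ℝ} (hi : i ≠ 0) (him : i ≤ m) (hq0 : 0 < q) (hq1 : q < 1) :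
    i * Real.log ((m + 1 - i) * q / i) + i - Real.log i / 2 - 1 - m * (q / (1 - q))
      ≤ Real.log (binomialMass m q i) := by
  have hi0 : (i : ℝ) ≠ 0 := Nat.cast_ne_zero.2 hi
  have hbase : (m : ℝ) + 1 - i ≠ 0 := by
    have : (i : ℝ) ≤ m := Nat.cast_le.2 him
    linarith
  have hchoose : (m.choose i : ℝ) ≠ 0 := by exact_mod_cast (Nat.choose_pos him).ne'
  have hq1' : 0 < 1 - q := sub_pos.2 hq1
  have hfail : -(m * (q / (1 - q))) ≤ ((m - i : ℕ) : ℝ) * Real.log (1 - q) :=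
    calc -(m * (q / (1 - q))) = m * -(q / (1 - q)) := by ring
      _ ≤ m * Real.log (1 - q) := by gcongr; exact neg_div_one_sub_le_log_one_sub hq1
      _ ≤ ((m - i : ℕ) : ℝ) * Real.log (1 - q) :=
        mul_le_mul_of_nonpos_right (Nat.cast_le.2 (Nat.sub_le m i))
          (Real.log_nonpos hq1'.le (by linarith))
  have hsucc : i * Real.log ((m + 1 - i) * q / i) + i - Real.log i / 2 - 1
      ≤ Real.log (m.choose i) + i * Real.log q := by
    rw [Real.log_div (mul_ne_zero hbase hq0.ne') hi0, Real.log_mul hbase hq0.ne']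
    linarith [log_choose_ge him, log_factorial_le hi]
  rw [binomialMass, Real.log_mul (by positivity) (by positivity), Real.log_mul hchoose
    (by positivity), Real.log_pow, Real.log_pow]
  linarith

end BinomialMass

section PoissonRegime

/-- The large deviation rate function of the Poisson distribution with mean `c`: a Poisson variable
of mean `c * L` takes a value close to `s * L` with probability
`exp (-L * (poissonRate c s + o(1)))` as `L → ∞`. -/
noncomputable def poissonRate (c s : ℝ) : ℝ := c - s - s * Real.log (c / s)

lemma poissonRate_add_poissonRate_sqrt_mul {c d : ℝ} (hc : 0 < c) (hd : 0 < d) :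
    poissonRate c √(c * d) + poissonRate d √(c * d) = (√c - √d) ^ 2 := by
  have hlog : Real.log (c / √(c * d)) + Real.log (d / √(c * d)) = 0 := by
    rw [← Real.log_mul (by positivity) (by positivity), div_mul_div_comm,
      Real.mul_self_sqrt (by positivity), div_self (by positivity), Real.log_one]
  have hsq : (√c - √d) ^ 2 = c + d - 2 * √(c * d) := by
    rw [Real.sqrt_mul hc.le, sub_sq, Real.sq_sqrt hc.le, Real.sq_sqrt hd.le]
    ring
  rw [hsq, poissonRate, poissonRate]
  linear_combination -√(c * d) * hlog

variable {ι : Type*} {l : Filter ι} {L : ι → ℝ}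

lemma tendsto_atTop_of_tendsto_div {x : ι → ℝ} {s : ℝ} (hL : Tendsto L l atTop) (hs : 0 < s)
    (hx : Tendsto (fun n => x n / L n) l (𝓝 s)) : Tendsto x l atTop := by
  refine (hx.pos_mul_atTop hs hL).congr' ?_
  filter_upwards [hL.eventually_ne_atTop 0] with n hn
  exact div_mul_cancel₀ _ hn

lemma tendsto_log_div_of_tendsto_div {x : ι → ℝ} {s : ℝ} (hL : Tendsto L l atTop) (hs : 0 < s)
    (hx : Tendsto (fun n => x n / L n) l (𝓝 s)) :
    Tendsto (fun n => Real.log (x n) / L n) l (𝓝 0) := by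
  have hx_top := tendsto_atTop_of_tendsto_div hL hs hx
  have hlog : Tendsto (fun n => Real.log (x n) / x n) l (𝓝 0) :=
    Real.isLittleO_log_id_atTop.tendsto_div_nhds_zero.comp hx_top
  refine (zero_mul s ▸ hlog.mul hx).congr' ?_
  filter_upwards [hx_top.eventually_ne_atTop 0] with n hn
  exact div_mul_div_cancel₀ hn

lemma tendsto_natCeil_div {x : ι → ℝ} {s : ℝ} (hL : Tendsto L l atTop) (hs : 0 ≤ s)
    (hx : Tendsto (fun n => x n / L n) l (𝓝 s)) :
    Tendsto (fun n => (⌈x n⌉₊ : ℝ) / L n) l (𝓝 s) := by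
  have hupper : Tendsto (fun n => |x n / L n| + 1 / L n) l (𝓝 s) := by
    simpa only [abs_of_nonneg hs, add_zero] using hx.abs.add (tendsto_const_nhds.div_atTop hL)
  refine tendsto_of_tendsto_of_tendsto_of_le_of_le' hx hupper ?_ ?_ <;>
    filter_upwards [hL.eventually_gt_atTop 0] with n hn
  · gcongr
    exact Nat.le_ceil _
  · rw [abs_div, abs_of_pos hn, ← add_div]
    gcongr
    exact (Nat.cast_le.2 (Nat.ceil_mono (le_abs_self _))).trans
      (Nat.ceil_lt_add_one (abs_nonneg _)).le

section Limits

variable {m i : ι → ℕ} {q : ι → ℝ} {c s : ℝ}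

lemma tendsto_succ_sub_mul_div (hL : Tendsto L l atTop) (hq : Tendsto q l (𝓝 0))
    (hmq : Tendsto (fun n => m n * q n / L n) l (𝓝 c))
    (hi : Tendsto (fun n => (i n : ℝ) / L n) l (𝓝 s)) :
    Tendsto (fun n => (m n + 1 - i n) * q n / L n) l (𝓝 c) := by
  have := (hmq.add (hq.div_atTop hL)).sub (hi.mul hq)
  rw [mul_zero, add_zero, sub_zero] at this
  exact this.congr fun n => by ring

lemma tendsto_log_binomialMass_lower_bound_div (hL : Tendsto L l atTop) (hc : 0 < c) (hs : 0 < s)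
    (hq : Tendsto q l (𝓝 0)) (hmq : Tendsto (fun n => m n * q n / L n) l (𝓝 c))
    (hi : Tendsto (fun n => (i n : ℝ) / L n) l (𝓝 s)) :
    Tendsto (fun n => (i n * Real.log ((m n + 1 - i n) * q n / i n) + i n - Real.log (i n) / 2 - 1
      - m n * (q n / (1 - q n))) / L n) l (𝓝 (-poissonRate c s)) := by
  have hratio : Tendsto (fun n => (m n + 1 - i n) * q n / i n) l (𝓝 (c / s)) := by
    refine ((tendsto_succ_sub_mul_div hL hq hmq hi).div hi hs.ne').congr' ?_
    filter_upwards [hL.eventually_ne_atTop 0] with n hn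
    exact div_div_div_cancel_right₀ hn _ _
  have hlog_i := (tendsto_log_div_of_tendsto_div hL hs hi).div_const 2
  have hinv : Tendsto (fun n => 1 / L n) l (𝓝 0) := tendsto_const_nhds.div_atTop hL
  have hfail : Tendsto (fun n => m n * q n / L n / (1 - q n)) l (𝓝 (c / (1 - 0))) :=
    hmq.div (tendsto_const_nhds.sub hq) (by norm_num)
  have hsum := ((((hi.mul (hratio.log (by positivity))).add hi).sub hlog_i).sub hinv).sub hfail
  have hlim : s * Real.log (c / s) + s - 0 / 2 - 0 - c / (1 - 0) = -poissonRate c s := by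
    rw [poissonRate]
    ring
  exact (hlim ▸ hsum).congr fun n => by ring

theorem eventually_exp_le_binomialMass {r : ℝ} (hL : Tendsto L l atTop) (hc : 0 < c) (hs : 0 < s)
    (hq : Tendsto q l (𝓝 0)) (hmq : Tendsto (fun n => m n * q n / L n) l (𝓝 c))
    (hi : Tendsto (fun n => (i n : ℝ) / L n) l (𝓝 s)) (hr : poissonRate c s < r) :
    ∀ᶠ n in l, Real.exp (-(L n * r)) ≤ binomialMass (m n) (q n) (i n) := by
  filter_upwards [hL.eventually_gt_atTop 0, hq.eventually_lt_const one_pos,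
    hmq.eventually_const_lt hc, hi.eventually_const_lt hs,
    (tendsto_succ_sub_mul_div hL hq hmq hi).eventually_const_lt hc,
    (tendsto_log_binomialMass_lower_bound_div hL hc hs hq hmq hi).eventually_const_lt
      (neg_lt_neg hr)] with n hLn hq1 hmq_pos hi_pos hgap hbound
  have hq0 : 0 < q n :=
    pos_of_mul_pos_right ((div_pos_iff_of_pos_right hLn).1 hmq_pos) (Nat.cast_nonneg _)
  have hi0 : i n ≠ 0 := Nat.cast_ne_zero.1 ((div_pos_iff_of_pos_right hLn).1 hi_pos).ne'
  have him : i n ≤ m n := by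
    have hlt : (0 : ℝ) < m n + 1 - i n :=
      (mul_pos_iff_of_pos_right hq0).1 ((div_pos_iff_of_pos_right hLn).1 hgap)
    exact Nat.lt_succ_iff.1 (by exact_mod_cast sub_pos.1 hlt)
  rw [← Real.le_log_iff_exp_le (binomialMass_pos him hq0 hq1), ← mul_neg, mul_comm]
  exact ((lt_div_iff₀ hLn).1 hbound).le.trans (log_binomialMass_ge hi0 him hq0 hq1)

end Limits

theorem eventually_exists_exp_le_binomialMass_mul {m k : ι → ℕ} {q p t : ι → ℝ} {c d ε : ℝ}
    (hL : Tendsto L l atTop) (hc : 0 < c) (hd : 0 < d)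
    (hq : Tendsto q l (𝓝 0)) (hmq : Tendsto (fun n => m n * q n / L n) l (𝓝 c))
    (hp : Tendsto p l (𝓝 0)) (hkp : Tendsto (fun n => k n * p n / L n) l (𝓝 d))
    (ht : Tendsto (fun n => t n / L n) l (𝓝 0)) (hε : 0 < ε) :
    ∀ᶠ n in l, ∃ i j : ℕ, t n ≤ i - j ∧
      Real.exp (-(L n * ((√c - √d) ^ 2 + ε)))
        ≤ binomialMass (m n) (q n) i * binomialMass (k n) (p n) j := by
  set s := √(c * d) with hs_def
  have hs : 0 < s := by positivity
  let j : ι → ℕ := fun n => ⌈s * L n⌉₊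
  let i : ι → ℕ := fun n => ⌈j n + t n⌉₊
  have hj : Tendsto (fun n => (j n : ℝ) / L n) l (𝓝 s) :=
    (tendsto_nat_ceil_mul_div_atTop hs.le).comp hL
  have hi : Tendsto (fun n => (i n : ℝ) / L n) l (𝓝 s) := by
    refine tendsto_natCeil_div hL hs.le ?_
    simpa only [add_div, add_zero] using hj.add ht
  filter_upwards [
    eventually_exp_le_binomialMass hL hc hs hq hmq hi (lt_add_of_pos_right _ (half_pos hε)),
    eventually_exp_le_binomialMass hL hd hs hp hkp hj (lt_add_of_pos_right _ (half_pos hε))]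
    with n hmass_i hmass_j
  refine ⟨i n, j n, by linarith [Nat.le_ceil (j n + t n)], ?_⟩
  calc Real.exp (-(L n * ((√c - √d) ^ 2 + ε)))
      = Real.exp (-(L n * (poissonRate c s + ε / 2)))
          * Real.exp (-(L n * (poissonRate d s + ε / 2))) := by
        rw [← poissonRate_add_poissonRate_sqrt_mul hc hd, ← hs_def, ← Real.exp_add]
        ring_nf
    _ ≤ binomialMass (m n) (q n) (i n) * binomialMass (k n) (p n) (j n) :=
        mul_le_mul hmass_i hmass_j (Real.exp_pos _).le ((Real.exp_pos _).le.trans hmass_i)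

end PoissonRegime

section BernoulliSums

variable {Ω ι κ : Type*} [MeasurableSpace Ω] {μ : Measure Ω} [Fintype ι] [Fintype κ]

lemma measureReal_eq_one_and_measureReal_eq_zero {V : Ω → ℝ} {q : ℝ} (hq : q ∈ Set.Icc 0 1)
    (hV : μ {ω | V ω = 1} = ENNReal.ofReal q ∧ μ {ω | V ω = 0} = 1 - ENNReal.ofReal q) :
    μ.real {ω | V ω = 1} = q ∧ μ.real {ω | V ω = 0} = 1 - q := by
  rw [measureReal_def, measureReal_def, hV.1, hV.2,
    ENNReal.toReal_sub_of_le (ENNReal.ofReal_le_one.2 hq.2) ENNReal.one_ne_top,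
    ENNReal.toReal_ofReal hq.1, ENNReal.toReal_one]
  exact ⟨rfl, rfl⟩

lemma measureReal_eq_indicator_of_iIndepFun {V : ι → Ω → ℝ} {q : ℝ} (hV : iIndepFun V μ)
    (hlaw : ∀ k, μ.real {ω | V k ω = 1} = q ∧ μ.real {ω | V k ω = 0} = 1 - q) (A : Finset ι) :
    μ.real {ω | (V · ω) = (A : Set ι).indicator 1}
      = q ^ A.card * (1 - q) ^ (Fintype.card ι - A.card) := by
  classical
  have hset : {ω | (V · ω) = (A : Set ι).indicator 1}
      = ⋂ k ∈ Finset.univ, V k ⁻¹' {(A : Set ι).indicator 1 k} := by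
    ext ω
    simp [funext_iff]
  have hfactor (k : ι) : μ.real (V k ⁻¹' {(A : Set ι).indicator 1 k})
      = if k ∈ A then q else 1 - q := by
    by_cases hk : k ∈ A
    · simpa [hk, Set.preimage] using (hlaw k).1
    · simpa [hk, Set.preimage] using (hlaw k).2
  rw [hset, measureReal_def, hV.measure_inter_preimage_eq_mul Finset.univ
    fun k _ => measurableSet_singleton _, ENNReal.toReal_prod]
  simp only [← measureReal_def, hfactor, Finset.prod_ite, Finset.prod_const,
    Finset.filter_mem_eq_inter, Finset.univ_inter, Finset.filter_not, ← Finset.compl_eq_univ_sdiff,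
    Finset.card_compl]

lemma binomialMass_le_measureReal_sum_eq {V : ι → Ω → ℝ} {q : ℝ} (hV : iIndepFun V μ)
    (hmV : ∀ k, Measurable (V k))
    (hlaw : ∀ k, μ.real {ω | V k ω = 1} = q ∧ μ.real {ω | V k ω = 0} = 1 - q) (i : ℕ) :
    binomialMass (Fintype.card ι) q i ≤ μ.real {ω | ∑ k, V k ω = i} := by
  classical
  have := hV.isProbabilityMeasure
  let E : Finset ι → Set Ω := fun A => {ω | (V · ω) = (A : Set ι).indicator 1}
  have hE_meas (A : Finset ι) : MeasurableSet (E A) :=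
    measurable_pi_lambda _ hmV (measurableSet_singleton _)
  have hE_disj : Pairwise (Function.onFun Disjoint E) := fun A B hAB =>
    Set.disjoint_left.2 fun ω hA hB => hAB <| Finset.coe_injective <|
      Set.indicator_one_inj ℝ (hA.symm.trans hB)
  have hE_sub : ⋃ A ∈ Finset.univ.powersetCard i, E A ⊆ {ω | ∑ k, V k ω = i} := by
    refine Set.iUnion₂_subset fun A hA ω hω => ?_
    have hω' (k : ι) : V k ω = (A : Set ι).indicator 1 k := congrFun hω k
    simp [hω', Set.indicator_apply, (Finset.mem_powersetCard.1 hA).2]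
  have hE_mass : ∀ A ∈ Finset.univ.powersetCard i,
      μ.real (E A) = q ^ i * (1 - q) ^ (Fintype.card ι - i) := fun A hA =>
    (Finset.mem_powersetCard.1 hA).2 ▸ measureReal_eq_indicator_of_iIndepFun hV hlaw A
  calc binomialMass (Fintype.card ι) q i = ∑ A ∈ Finset.univ.powersetCard i, μ.real (E A) := by
        simp only [Finset.sum_congr rfl hE_mass, binomialMass, Finset.sum_const,
          Finset.card_powersetCard, Finset.card_univ, nsmul_eq_mul, mul_assoc]
    _ = μ.real (⋃ A ∈ Finset.univ.powersetCard i, E A) :=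
        (measureReal_biUnion_finset (hE_disj.set_pairwise _) fun A _ => hE_meas A).symm
    _ ≤ μ.real {ω | ∑ k, V k ω = i} := measureReal_mono hE_sub

lemma indepFun_sum_sum_of_iIndepFun_elim {Z : ι → Ω → ℝ} {W : κ → Ω → ℝ}
    (hindep : iIndepFun (Sum.elim Z W) μ) (hmZ : ∀ k, Measurable (Z k))
    (hmW : ∀ k, Measurable (W k)) :
    IndepFun (fun ω => ∑ k, Z k ω) (fun ω => ∑ k, W k ω) μ := by
  have hdisj : Disjoint (Finset.univ.map Function.Embedding.inl : Finset (ι ⊕ κ))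
      (Finset.univ.map Function.Embedding.inr) := by
    simp [Finset.disjoint_left]
  exact (hindep.indepFun_finset _ _ hdisj (Sum.rec hmZ hmW)).comp
    (φ := fun x => ∑ k : ι, x ⟨Sum.inl k, by simp⟩) (ψ := fun x => ∑ k : κ, x ⟨Sum.inr k, by simp⟩)
    (Finset.measurable_fun_sum _ fun _ _ => measurable_pi_apply _)
    (Finset.measurable_fun_sum _ fun _ _ => measurable_pi_apply _)

theorem binomialMass_mul_binomialMass_le_measureReal {Z : ι → Ω → ℝ} {W : κ → Ω → ℝ} {X : Ω → ℝ}
    {q p : ℝ} {i j : ℕ} (hindep : iIndepFun (Sum.elim Z W) μ)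
    (hmZ : ∀ k, Measurable (Z k)) (hmW : ∀ k, Measurable (W k))
    (hq : q ∈ Set.Icc 0 1) (hp : p ∈ Set.Icc 0 1)
    (hZ : ∀ k, μ {ω | Z k ω = 1} = ENNReal.ofReal q ∧ μ {ω | Z k ω = 0} = 1 - ENNReal.ofReal q)
    (hW : ∀ k, μ {ω | W k ω = 1} = ENNReal.ofReal p ∧ μ {ω | W k ω = 0} = 1 - ENNReal.ofReal p)
    (hX : ∀ᵐ ω ∂μ, X ω ≤ i - j) :
    binomialMass (Fintype.card ι) q i * binomialMass (Fintype.card κ) p j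
      ≤ μ.real {ω | X ω ≤ ∑ k, Z k ω - ∑ k, W k ω} := by
  have := hindep.isProbabilityMeasure
  have hZ_sum := binomialMass_le_measureReal_sum_eq (hindep.precomp Sum.inl_injective) hmZ
    (fun k => measureReal_eq_one_and_measureReal_eq_zero hq (hZ k)) i
  have hW_sum := binomialMass_le_measureReal_sum_eq (hindep.precomp Sum.inr_injective) hmW
    (fun k => measureReal_eq_one_and_measureReal_eq_zero hp (hW k)) j
  calc binomialMass (Fintype.card ι) q i * binomialMass (Fintype.card κ) p j
      ≤ μ.real {ω | ∑ k, Z k ω = i} * μ.real {ω | ∑ k, W k ω = j} :=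
        mul_le_mul hZ_sum hW_sum (binomialMass_nonneg hp _ _) measureReal_nonneg
    _ = μ.real {ω | ∑ k, Z k ω = i ∧ ∑ k, W k ω = j} := by
        simp only [measureReal_def, ← ENNReal.toReal_mul]
        exact congrArg ENNReal.toReal
          ((indepFun_sum_sum_of_iIndepFun_elim hindep hmZ hmW).measure_inter_preimage_eq_mul _ _
            (measurableSet_singleton _) (measurableSet_singleton _)).symm
    _ ≤ μ.real {ω | X ω ≤ ∑ k, Z k ω - ∑ k, W k ω} := by
        refine ENNReal.toReal_mono (measure_ne_top _ _) (measure_mono_ae ?_)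
        filter_upwards [hX] with ω hω
        rintro ⟨hZω, hWω⟩
        change X ω ≤ ∑ k, Z k ω - ∑ k, W k ω
        rwa [hZω, hWω]

end BernoulliSums

section SparseRegime

lemma tendsto_log_natCast_atTop : Tendsto (fun n : ℕ => Real.log n) atTop atTop :=
  Real.tendsto_log_atTop.comp tendsto_natCast_atTop_atTop

lemma tendsto_half_div : Tendsto (fun n : ℕ => (half n : ℝ) / n) atTop (𝓝 (1 / 2)) := by
  refine ((tendsto_nat_ceil_mul_div_atTop (R := ℝ) (a := 1 / 2) (by norm_num)).comp
    tendsto_natCast_atTop_atTop).congr fun n => ?_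
  simp only [Function.comp_apply, half, one_div_mul_eq_div]

lemma tendsto_mul_log_div (c : ℝ) : Tendsto (fun n : ℕ => c * Real.log n / n) atTop (𝓝 0) := by
  have hlog : Tendsto (fun n : ℕ => Real.log n / n) atTop (𝓝 0) :=
    Real.isLittleO_log_id_atTop.tendsto_div_nhds_zero.comp tendsto_natCast_atTop_atTop
  simpa only [mul_div_assoc, mul_zero] using hlog.const_mul c

lemma tendsto_min_one_mul_log_div (c : ℝ) :
    Tendsto (fun n : ℕ => min 1 (c * Real.log n / n)) atTop (𝓝 0) := by
  simpa using (tendsto_const_nhds (x := (1 : ℝ))).min (tendsto_mul_log_div c)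

lemma tendsto_half_mul_min_one_mul_log_div (c : ℝ) :
    Tendsto (fun n : ℕ => half n * min 1 (c * Real.log n / n) / Real.log n) atTop (𝓝 (c / 2)) := by
  refine (mul_one_div c 2 ▸ tendsto_half_div.const_mul c).congr' ?_
  filter_upwards [(tendsto_mul_log_div c).eventually_lt_const one_pos,
    tendsto_log_natCast_atTop.eventually_ne_atTop 0] with n hlt hlog
  rw [min_eq_right hlt.le]
  field_simp

lemma min_one_mul_log_div_mem_Icc {c : ℝ} (hc : 0 ≤ c) (n : ℕ) :
    min 1 (c * Real.log n / n) ∈ Set.Icc 0 1 :=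
  ⟨le_min zero_le_one (div_nonneg (mul_nonneg hc (Real.log_natCast_nonneg n)) n.cast_nonneg),
    min_le_left _ _⟩

end SparseRegime

theorem sbm_llr_lower_bound_few_features_general
    (a b : ℝ) (ha : 0 < a) (hb : 0 < b)
    (Ω : ℕ → Type*) (mΩ : ∀ n, MeasurableSpace (Ω n)) (P : ∀ n, Measure (Ω n))
    (Z W : ∀ n, Fin (half n) → Ω n → ℝ)
    (hmZ : ∀ n k, Measurable (Z n k)) (hmW : ∀ n k, Measurable (W n k))
    (hindep : ∀ n, 3 ≤ n → iIndepFun (Sum.elim (Z n) (W n)) (P n))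
    (hZ : ∀ n, 3 ≤ n → ∀ k,
      P n {ω | Z n k ω = 1} = ENNReal.ofReal (min 1 (b * Real.log n / n)) ∧
      P n {ω | Z n k ω = 0} = 1 - ENNReal.ofReal (min 1 (b * Real.log n / n)))
    (hW : ∀ n, 3 ≤ n → ∀ k,
      P n {ω | W n k ω = 1} = ENNReal.ofReal (min 1 (a * Real.log n / n)) ∧
      P n {ω | W n k ω = 0} = 1 - ENNReal.ofReal (min 1 (a * Real.log n / n)))
    (t : ℕ → ℝ) (ht : Tendsto (fun n => t n / Real.log n) atTop (𝓝 0))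
    (X : ∀ n, Ω n → ℝ) (hX : ∀ n, 3 ≤ n → ∀ᵐ ω ∂(P n), X n ω ≤ t n) :
    ∀ ε > (0 : ℝ), ∃ N : ℕ, ∀ n ≥ N,
      (n : ℝ) ^ (-((√a - √b) ^ 2) / 2 - ε)
        ≤ (P n {ω | X n ω ≤ ∑ k, (Z n k ω - W n k ω)}).toReal := by
  intro ε hε
  have hmass := eventually_exists_exp_le_binomialMass_mul tendsto_log_natCast_atTop
    (half_pos hb) (half_pos ha)
    (tendsto_min_one_mul_log_div b) (tendsto_half_mul_min_one_mul_log_div b)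
    (tendsto_min_one_mul_log_div a) (tendsto_half_mul_min_one_mul_log_div a) ht hε
  have hexponent : (√(b / 2) - √(a / 2)) ^ 2 = (√a - √b) ^ 2 / 2 := by
    rw [Real.sqrt_div ha.le, Real.sqrt_div hb.le, ← sub_div, div_pow, Real.sq_sqrt zero_le_two]
    ring
  refine eventually_atTop.1 ?_
  filter_upwards [hmass, eventually_ge_atTop 3] with n ⟨i, j, hij, hexp⟩ hn
  have hle := binomialMass_mul_binomialMass_le_measureReal (hindep n hn) (hmZ n) (hmW n)
    (min_one_mul_log_div_mem_Icc hb.le n) (min_one_mul_log_div_mem_Icc ha.le n)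
    (hZ n hn) (hW n hn)
    ((hX n hn).mono fun ω hω => hω.trans hij)
  simp only [Fintype.card_fin, ← Finset.sum_sub_distrib] at hle
  refine le_trans (le_of_eq ?_) (hexp.trans hle)
  rw [Real.rpow_def_of_pos (by positivity), hexponent]
  ring_nf

section Features

lemma iIndepFun_elim_of_iIndepFun_elim_elim {Ω ι κ τ β : Type*} [MeasurableSpace Ω]
    [MeasurableSpace β] {μ : Measure Ω} {Z : ι → Ω → β} {W : κ → Ω → β} {h : τ → Ω → β}
    (hindep : iIndepFun (Sum.elim Z (Sum.elim W h)) μ) : iIndepFun (Sum.elim Z W) μ := by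
  have hprecomp := hindep.precomp (Function.injective_id.sumMap Sum.inl_injective)
  convert hprecomp using 1
  ext (k | k) <;> rfl

lemma ae_sum_le_card_mul {Ω ι : Type*} [MeasurableSpace Ω] [Fintype ι] {μ : Measure Ω}
    {h : ι → Ω → ℝ} {C : ℝ} (hh : ∀ j, ∀ᵐ ω ∂μ, h j ω ≤ C) :
    ∀ᵐ ω ∂μ, ∑ j, h j ω ≤ Fintype.card ι * C := by
  filter_upwards [ae_all_iff.2 hh] with ω hω
  simpa using Finset.sum_le_card_nsmul Finset.univ (h · ω) C fun j _ => hω j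

lemma tendsto_features_threshold_div_log {K : ℕ → ℕ}
    (hK : Tendsto (fun n => (K n : ℝ) / Real.log n) atTop (𝓝 0)) (c C : ℝ) :
    Tendsto (fun n : ℕ => (c * (K n * C) + 1 + Real.log n / Real.log (Real.log n)) / Real.log n)
      atTop (𝓝 0) := by
  have hL := tendsto_log_natCast_atTop
  have hinv : Tendsto (fun n : ℕ => 1 / Real.log n) atTop (𝓝 0) := tendsto_const_nhds.div_atTop hL
  have hLL := Real.tendsto_log_atTop.comp hL
  have hinv' : Tendsto (fun n : ℕ => 1 / Real.log (Real.log n)) atTop (𝓝 0) :=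
    tendsto_const_nhds.div_atTop hLL
  have hsum := ((hK.const_mul (c * C)).add hinv).add hinv'
  rw [mul_zero, add_zero, add_zero] at hsum
  refine hsum.congr' ?_
  filter_upwards [hL.eventually_ne_atTop 0] with n hn
  rw [add_div, add_div, div_right_comm (Real.log n), div_self hn]
  ring

end Features

theorem sbm_llr_lower_bound_few_features
    (a b : ℝ) (hb : 0 < b) (hab : b < a)
    (C : ℝ) (hC : 0 < C)
    (K : ℕ → ℕ) (hK : Tendsto (fun n => (K n : ℝ) / Real.log n) atTop (nhds 0))
    (Ω : ℕ → Type*) (mΩ : ∀ n, MeasurableSpace (Ω n))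
    (P : ∀ n, Measure (Ω n)) (hP : ∀ n, IsProbabilityMeasure (P n))
    (Z W : ∀ n, Fin (half n) → Ω n → ℝ)
    (h : ∀ n, Fin (K n) → Ω n → ℝ)
    (hmZ : ∀ n k, Measurable (Z n k)) (hmW : ∀ n k, Measurable (W n k))
    (hmh : ∀ n j, Measurable (h n j))
    (hindep : ∀ n, 3 ≤ n →
      iIndepFun
        (Sum.elim (Z n) (Sum.elim (W n) (h n))) (P n))
    (hZ : ∀ n, 3 ≤ n → ∀ k,
      P n {ω | Z n k ω = 1} = ENNReal.ofReal (min 1 (b * Real.log n / n)) ∧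
      P n {ω | Z n k ω = 0} = 1 - ENNReal.ofReal (min 1 (b * Real.log n / n)))
    (hW : ∀ n, 3 ≤ n → ∀ k,
      P n {ω | W n k ω = 1} = ENNReal.ofReal (min 1 (a * Real.log n / n)) ∧
      P n {ω | W n k ω = 0} = 1 - ENNReal.ofReal (min 1 (a * Real.log n / n)))
    (hhid : ∀ n, 3 ≤ n → ∀ j j' : Fin (K n),
      Measure.map (h n j) (P n) = Measure.map (h n j') (P n))
    (hhbdd : ∀ n, 3 ≤ n → ∀ j : Fin (K n), ∀ᵐ ω ∂(P n), |h n j ω| ≤ C) :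
    ∀ ε > (0 : ℝ), ∃ N : ℕ, ∀ n ≥ N,
      (n : ℝ) ^ (-((Real.sqrt a - Real.sqrt b) ^ 2) / 2 - ε)
        ≤ (P n {ω | (1 / Real.log (a / b)) * (∑ j, h n j ω)
              + 1 + Real.log n / Real.log (Real.log n)
            ≤ ∑ k, (Z n k ω - W n k ω)}).toReal := by
  have hT : 0 ≤ 1 / Real.log (a / b) :=
    one_div_nonneg.2 (Real.log_nonneg ((one_le_div hb).2 hab.le))
  refine sbm_llr_lower_bound_few_features_general a b (hb.trans hab) hb Ω mΩ P Z W hmZ hmW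
    (fun n hn => iIndepFun_elim_of_iIndepFun_elim_elim (hindep n hn)) hZ hW _
    (tendsto_features_threshold_div_log hK (1 / Real.log (a / b)) C) _ fun n hn => ?_
  filter_upwards [ae_sum_le_card_mul fun j => (hhbdd n hn j).mono fun _ => le_of_abs_le] with ω hω
  rw [Fintype.card_fin] at hω
  gcongr
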